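/- Let I be a monomial ideal in S = K[x₁,…,xₙ]. Then for all integers i₁, i₂ ≥ 0 one has t_{i₁+i₂}(S/I) ≤ t_{i₁}(S/I) + t_{i₂}(S/I). -/

import Mathlib

open Finsupp

noncomputable section

variable (K : Type) [Field K]

section Core
variable (P : Type) [Preorder P]

/-- Order chains with `n` elements of the poset `P`, written as strictly
decreasing tuples `(x₀ > x₁ > ⋯ > x_{n-1})`. -/
def OChain (n : ℕ) : Type := {c : Fin n → P // StrictAnti c}

/-- The chain group in "level" `n`: the `K`-vector space with basis the order chains with
`n` elements.  Level `n` corresponds to homological degree `n - 1`; in particular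
`CGrp K P 0 ≅ K` is the reduced part `C̃₋₁`. -/
abbrev CGrp (n : ℕ) : Type := OChain P n →₀ K

/-- Deletion of the `k`-th entry of an order chain. -/
def odel {n : ℕ} (k : Fin (n + 1)) (c : OChain P (n + 1)) : OChain P n :=
  ⟨c.1 ∘ k.succAbove, c.2.comp_strictMono (Fin.strictMono_succAbove k)⟩

/-- The simplicial boundary map (of the reduced simplicial chain complex of the order
complex), from level `n+1` to level `n`. -/
def cbdry (n : ℕ) : CGrp K P (n + 1) →ₗ[K] CGrp K P n :=
  Finsupp.lsum K fun c => ∑ k : Fin (n + 1), ((-1 : K) ^ (k : ℕ)) • Finsupp.lsingle (odel P k c)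

/-- The cycles in level `n` (every level-0 chain, i.e. multiple of the empty chain,
is a cycle). -/
def cyclesAt : (n : ℕ) → Submodule K (CGrp K P n)
  | 0 => ⊤
  | (n + 1) => LinearMap.ker (cbdry K P n)

/-- The boundaries in level `n`. -/
def boundariesIn (n : ℕ) : Submodule K (CGrp K P n) :=
  LinearMap.range (cbdry K P n)

/-- `H̃_{n-1}(P) ≠ 0`: nontriviality of the reduced simplicial homology (with coefficients
in `K`) of the order complex of `P` in degree `n - 1` (level `n`). -/
def RHomNontrivial (n : ℕ) : Prop := ¬ cyclesAt K P n ≤ boundariesIn K P n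

end Core


section Monomial

variable (nv : ℕ)

/-- The polynomial ring `S = K[x₁, …, xₙ]`. -/
abbrev PolyS : Type := MvPolynomial (Fin nv) K

/-- The monomial `x^d` attached to an exponent vector `d`. -/
def monOf (d : Fin nv → ℕ) : PolyS K nv :=
  MvPolynomial.monomial (Finsupp.equivFunOnFinite.symm d) 1

/-- `I` is a monomial ideal: it is generated by monomials. -/
def IsMonomialIdeal (I : Ideal (PolyS K nv)) : Prop :=
  ∃ G : Set (Fin nv → ℕ), I = Ideal.span (monOf K nv '' G)

/-- The minimal monomial generating set `G(I)` of a monomial ideal: exponent vectors of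
the monomials of `I` that are minimal with respect to divisibility. -/
def minGens (I : Ideal (PolyS K nv)) : Set (Fin nv → ℕ) :=
  {d | monOf K nv d ∈ I ∧ ∀ d' < d, monOf K nv d' ∉ I}

/-- The underlying set of the LCM-lattice of a monomial ideal: all least common multiples
(= pointwise suprema of exponent vectors) of subsets of the minimal generators, ordered by
divisibility (= the pointwise order).  The empty subset contributes `lcm ∅ = 1`, i.e. the
zero exponent vector. -/
def lcmSet (I : Ideal (PolyS K nv)) : Set (Fin nv → ℕ) :=
  {m | ∃ B : Finset (Fin nv → ℕ), ↑B ⊆ minGens K nv I ∧ m = B.sup id}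

/-- The open interval `(1, m)` in the LCM-lattice of `I`. -/
def openInt (I : Ideal (PolyS K nv)) (m : Fin nv → ℕ) : Set (Fin nv → ℕ) :=
  {p | p ∈ lcmSet K nv I ∧ 0 < p ∧ p < m}

/-- Total degree of a monomial given by its exponent vector. -/
def degTot (m : Fin nv → ℕ) : ℕ := ∑ r, m r

open Classical in
/-- The multigraded Betti number `β_{i,m}(S/I) = dim_K Tor_i^S(S/I, K)_m` of a monomial
ideal, via the Gasharov–Peeva–Welker formula: for `i ≥ 1` and `m` in the LCM-lattice,
`β_{i,m}(S/I) = dim_K H̃_{i-2}((1, m))` (reduced homology of the order complex of the open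
interval in the LCM-lattice; degree `i-2` is level `i-1`; the dimension of the homology is
the dimension of the cycles minus the dimension of the boundaries); moreover `β_{0,m} = 1` iff
`m = 1`, and `β_{i,m} = 0` for `m` outside the LCM-lattice. -/
noncomputable def multiBetti (I : Ideal (PolyS K nv)) (i : ℕ) (m : Fin nv → ℕ) : ℕ :=
  if i = 0 then (if m = 0 then 1 else 0)
  else if m ∈ lcmSet K nv I ∧ m ≠ 0 then
    Module.finrank K ↥(cyclesAt K ↥(openInt K nv I m) (i - 1)) -
      Module.finrank K ↥(boundariesIn K ↥(openInt K nv I m) (i - 1))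
  else 0

/-- The graded Betti number `β_{i,j}(S/I) = dim_K Tor_i^S(S/I, K)_j`: the sum of the
multigraded Betti numbers over the multidegrees of total degree `j`. -/
noncomputable def betti (I : Ideal (PolyS K nv)) (i j : ℕ) : ℕ :=
  ∑ᶠ m ∈ {m : Fin nv → ℕ | degTot nv m = j}, multiBetti K nv I i m

/-- The maximal shift `t_i(S/I) = max { j : β_{i,j}(S/I) ≠ 0 }`, with `t_i(S/I) = 0`
if `β_{i,j}(S/I) = 0` for all `j` (the supremum over the empty set of naturals is `0`). -/
noncomputable def tshift (I : Ideal (PolyS K nv)) (i : ℕ) : ℕ :=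
  sSup {j | betti K nv I i j ≠ 0}

/-- `a_i(S/I)`: the number of multidegrees `m` with `β_{i,m}(S/I) ≠ 0`. -/
noncomputable def acount (I : Ideal (PolyS K nv)) (i : ℕ) : ℕ :=
  {m : Fin nv → ℕ | multiBetti K nv I i m ≠ 0}.ncard

end Monomial


section FilteredComplexes

variable {K}

/-- A linear map whose values on basis vectors are supported in prescribed sets maps vectors
supported in `S` to vectors supported in `T`. -/
theorem map_mem_supported {A B : Type} (φ : (A →₀ K) →ₗ[K] (B →₀ K)) {S : Set A} {T : Set B}
    (h : ∀ a ∈ S, φ (single a 1) ∈ supported K K T) {x : A →₀ K}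
    (hx : x ∈ supported K K S) : φ x ∈ supported K K T := by
  rw [supported_eq_span_single] at hx
  refine Submodule.span_induction ?_ (by simp) (fun x y _ _ hx hy => ?_) (fun r x _ hx => ?_) hx
  · rintro _ ⟨a, ha, rfl⟩
    exact h a ha
  · rw [map_add]; exact add_mem hx hy
  · rw [map_smul]; exact Submodule.smul_mem _ _ hx

/-- Linear maps that agree on the basis vectors of `S` agree on vectors supported in `S`. -/
theorem eq_of_mem_supported {A M : Type} [AddCommGroup M] [Module K M]
    (φ ψ : (A →₀ K) →ₗ[K] M) {S : Set A}
    (h : ∀ a ∈ S, φ (single a 1) = ψ (single a 1)) {x : A →₀ K}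
    (hx : x ∈ supported K K S) : φ x = ψ x := by
  rw [supported_eq_span_single] at hx
  refine LinearMap.eqOn_span (s := (fun a => single a (1 : K)) '' S) ?_ hx
  rintro _ ⟨a, ha, rfl⟩
  exact h a ha

theorem single_one_mem_supported {A : Type} {S : Set A} {a : A} (h : a ∈ S) :
    single a (1 : K) ∈ supported K K S :=
  single_mem_supported K 1 h

theorem mem_supported_of_mem_supported {A : Type} {S T : Set A} {x : A →₀ K}
    (hx : x ∈ supported K K S) (h : ∀ a ∈ S, a ∈ T) : x ∈ supported K K T :=
  supported_mono h hx

variable (K) (L : Type)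

/-- A finite complex of `K`-vector spaces with a homogeneous basis of cells, each of which has a
weight in `L` that the differential does not increase. -/
structure FilteredComplex [Preorder L] where
  /-- the cells -/
  Cell : Type
  finite : Finite Cell
  /-- the homological degree of a cell -/
  dim : Cell → ℕ
  /-- the weight of a cell -/
  wt : Cell → L
  /-- the differential -/
  d : (Cell →₀ K) →ₗ[K] (Cell →₀ K)
  d_d : ∀ x, d (d x) = 0
  d_single : ∀ b, d (single b 1) ∈ supported K K {c | dim c + 1 = dim b ∧ wt c ≤ wt b}

variable {K L}

namespace FilteredComplex

section Basic

variable [PartialOrder L] (X Y : FilteredComplex K L)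

open Classical in
theorem d_filter_dim (n : ℕ) (x : X.Cell →₀ K) :
    X.d (x.filter fun c => X.dim c = n) = (X.d x).filter fun c => X.dim c + 1 = n := by
  induction x using Finsupp.induction_linear with
  | zero => rw [filter_zero, map_zero, filter_zero]
  | add f g hf hg => simp only [filter_add, map_add, hf, hg]
  | single b r =>
    have hb := X.d_single b
    rw [mem_supported] at hb
    rw [← mul_one r, ← smul_single', map_smul]
    by_cases h : X.dim b = n
    · rw [filter_smul, filter_smul, filter_single_of_pos (p := fun c => X.dim c = n) h, map_smul]
      congr 1
      symm
      rw [filter_eq_self_iff]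
      intro c hc
      have := (hb (Finset.mem_coe.2 (mem_support_iff.2 hc))).1
      omega
    · rw [filter_smul, filter_smul, filter_single_of_neg (p := fun c => X.dim c = n) h, smul_zero,
        map_zero]
      symm
      convert smul_zero r
      rw [filter_eq_zero_iff]
      intro c hc
      by_contra hc'
      have := (hb (Finset.mem_coe.2 (mem_support_iff.2 hc'))).1
      omega

/-- A boundary of degree `n` of a chain with weights in `S` is the boundary of a chain of degree
`n + 1` with weights in `S`. -/
theorem exists_homogeneous_primitive {n : ℕ} {S : Set L} {y : X.Cell →₀ K}
    (hy : y ∈ supported K K {c | X.wt c ∈ S})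
    (hd : X.d y ∈ supported K K {c | X.dim c + 1 = n}) :
    ∃ y' ∈ supported K K {c | X.dim c = n ∧ X.wt c ∈ S}, X.d y' = X.d y := by
  classical
  refine ⟨y.filter fun c => X.dim c = n, ?_, ?_⟩
  · rw [mem_supported] at hy ⊢
    intro c hc
    rw [support_filter, Finset.mem_coe, Finset.mem_filter] at hc
    exact ⟨hc.2, hy (Finset.mem_coe.2 hc.1)⟩
  · rw [d_filter_dim, filter_eq_self_iff]
    intro c hc
    exact hd (Finset.mem_coe.2 (mem_support_iff.2 hc))

theorem d_mem_wt {S : Set L} (hS : IsLowerSet S) {x : X.Cell →₀ K}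
    (hx : x ∈ supported K K {c | X.wt c ∈ S}) : X.d x ∈ supported K K {c | X.wt c ∈ S} :=
  map_mem_supported X.d
    (fun b hb => mem_supported_of_mem_supported (X.d_single b) fun _ hc => hS hc.2 hb) hx

/-- The chains of weight less than `m` have no homology in degree `n`. -/
def Acyclic (m : L) (n : ℕ) : Prop :=
  ∀ z ∈ supported K K {c | X.dim c = n ∧ X.wt c < m}, X.d z = 0 →
    ∃ y ∈ supported K K {c | X.dim c = n + 1 ∧ X.wt c < m}, X.d y = z

variable [OrderBot L]

/-- `e` is the only cell of degree zero and the only cell of weight `⊥`, and the chains of weight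
at most `u` form an exact complex for each `u > ⊥`. -/
structure IsResolution (e : X.Cell) : Prop where
  dim_base : X.dim e = 0
  wt_base : X.wt e = ⊥
  pos : ∀ b, b ≠ e → 0 < X.dim b ∧ ⊥ < X.wt b
  exact : ∀ u, ⊥ < u → ∀ x ∈ supported K K {c | X.wt c ≤ u}, X.d x = 0 →
    ∃ y ∈ supported K K {c | X.wt c ≤ u}, X.d y = x

variable {X Y}

theorem IsResolution.d_base {e : X.Cell} (hX : X.IsResolution e) : X.d (single e 1) = 0 := by
  have h := X.d_single e
  have : {c | X.dim c + 1 = X.dim e ∧ X.wt c ≤ X.wt e} = ∅ := by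
    ext c
    simp [hX.dim_base]
  rwa [this, supported_empty, Submodule.mem_bot] at h

theorem IsResolution.exists_primitive {e : X.Cell} (hX : X.IsResolution e) {u : L} (hu : ⊥ < u)
    {n : ℕ} {x : X.Cell →₀ K} (hx : x ∈ supported K K {c | X.dim c + 1 = n ∧ X.wt c ≤ u})
    (hd : X.d x = 0) : ∃ y ∈ supported K K {c | X.dim c = n ∧ X.wt c ≤ u}, X.d y = x := by
  obtain ⟨y, hy, rfl⟩ := hX.exact u hu x (mem_supported_of_mem_supported hx fun _ hc => hc.2) hd
  exact X.exists_homogeneous_primitive (S := Set.Iic u) hy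
    (mem_supported_of_mem_supported hx fun _ hc => hc.1)

/-- Construction of chain maps (`ε = 1`, `γ = 0`) and chain homotopies (`ε = -1`) of degree `k`
into a resolution. -/
theorem exists_lift {e : X.Cell} (hX : X.IsResolution e) {f : Y.Cell} (hY : Y.IsResolution f)
    (ε : K) (k : ℕ) (γ : (X.Cell →₀ K) →ₗ[K] (Y.Cell →₀ K))
    (hγ : ∀ b, γ (single b 1) ∈
      supported K K {c | Y.dim c + 1 = X.dim b + k ∧ Y.wt c ≤ X.wt b})
    (hcomm : ∀ x, Y.d (γ x) + ε • γ (X.d x) = 0) (y₀ : Y.Cell →₀ K)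
    (hy₀ : y₀ ∈ supported K K {c | Y.dim c = k ∧ Y.wt c ≤ ⊥})
    (hd : Y.d y₀ = γ (single e 1)) :
    ∃ s : (X.Cell →₀ K) →ₗ[K] (Y.Cell →₀ K), s (single e 1) = y₀ ∧
      (∀ b, s (single b 1) ∈ supported K K {c | Y.dim c = X.dim b + k ∧ Y.wt c ≤ X.wt b}) ∧
      ∀ x, Y.d (s x) = γ x + ε • s (X.d x) := by
  classical
  have key : ∀ n : ℕ, ∃ s : (X.Cell →₀ K) →ₗ[K] (Y.Cell →₀ K), ∀ b, X.dim b < n →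
      (b = e → s (single b 1) = y₀) ∧
      s (single b 1) ∈ supported K K {c | Y.dim c = X.dim b + k ∧ Y.wt c ≤ X.wt b} ∧
      Y.d (s (single b 1)) = γ (single b 1) + ε • s (X.d (single b 1)) := by
    intro n
    induction n with
    | zero => exact ⟨0, fun b hb => absurd hb (Nat.not_lt_zero _)⟩
    | succ n ih =>
      obtain ⟨s, hs⟩ := ih
      have step : ∀ b, ∃ y, X.dim b = n → (b = e → y = y₀) ∧
          y ∈ supported K K {c | Y.dim c = X.dim b + k ∧ Y.wt c ≤ X.wt b} ∧
          Y.d y = γ (single b 1) + ε • s (X.d (single b 1)) := by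
        intro b
        by_cases hbn : X.dim b = n
        swap
        · exact ⟨0, fun h => absurd h hbn⟩
        by_cases hbe : b = e
        · subst hbe
          refine ⟨y₀, fun _ => ⟨fun _ => rfl, ?_, ?_⟩⟩
          · simpa [hX.dim_base, hX.wt_base] using hy₀
          · rw [hX.d_base, map_zero, smul_zero, add_zero, hd]
        obtain ⟨y, hy, hdy⟩ := hY.exists_primitive (hX.pos b hbe).2 (n := X.dim b + k)
          (x := γ (single b 1) + ε • s (X.d (single b 1)))
          (by
            refine add_mem (hγ b) (Submodule.smul_mem _ _ ?_)
            refine map_mem_supported s (fun c hc => ?_) (X.d_single b)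
            refine mem_supported_of_mem_supported (hs c (by have := hc.1; omega)).2.1
              fun c' hc' => ⟨?_, hc'.2.trans hc.2⟩
            have h1 := hc.1
            have h2 := hc'.1
            omega)
          (by
            have h1 : Y.d (s (X.d (single b 1))) =
                γ (X.d (single b 1)) + ε • s (X.d (X.d (single b 1))) := by
              refine eq_of_mem_supported (Y.d ∘ₗ s) (γ + ε • s ∘ₗ X.d) (fun c hc => ?_)
                (X.d_single b)
              exact (hs c (by have := hc.1; omega)).2.2
            rw [map_add, map_smul, h1, X.d_d, map_zero, smul_zero, add_zero, hcomm])
        exact ⟨y, fun _ => ⟨fun h => absurd h hbe, hy, hdy⟩⟩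
      choose y hy using step
      let t : (X.Cell →₀ K) →ₗ[K] (Y.Cell →₀ K) :=
        Finsupp.linearCombination K fun b => if X.dim b = n then y b else s (single b 1)
      have ht : ∀ b, t (single b 1) = if X.dim b = n then y b else s (single b 1) := by
        intro b
        simp [t, linearCombination_single]
      have hts : ∀ b, X.dim b ≤ n → t (X.d (single b 1)) = s (X.d (single b 1)) := by
        intro b hb
        refine eq_of_mem_supported t s (fun c hc => ?_) (X.d_single b)
        rw [ht, if_neg]
        have := hc.1
        omega
      refine ⟨t, fun b hb => ?_⟩
      rw [hts b (by omega), ht]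
      by_cases hbn : X.dim b = n
      · rw [if_pos hbn]
        exact hy b hbn
      · rw [if_neg hbn]
        exact hs b (by omega)
  have := X.finite
  obtain ⟨N, hN⟩ := (Set.finite_range X.dim).bddAbove
  obtain ⟨s, hs⟩ := key (N + 1)
  have hs' := fun b => hs b (Nat.lt_succ_of_le (hN ⟨b, rfl⟩))
  refine ⟨s, (hs' e).1 rfl, fun b => (hs' b).2.1, fun x => ?_⟩
  have : Y.d ∘ₗ s = γ + ε • s ∘ₗ X.d := by
    ext1 b
    ext1
    simpa using (hs' b).2.2
  exact LinearMap.congr_fun this x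

end Basic

end FilteredComplex

end FilteredComplexes

section ComparisonMaps

variable {K} {L : Type}

theorem mem_supported_iff_forall_ne {A : Type} {S : Set A} {x : A →₀ K} :
    x ∈ supported K K S ↔ ∀ a, x a ≠ 0 → a ∈ S := by
  rw [mem_supported]
  exact ⟨fun h a ha => h (Finset.mem_coe.2 (mem_support_iff.2 ha)),
    fun h a ha => h a (mem_support_iff.1 (Finset.mem_coe.1 ha))⟩

namespace FilteredComplex

variable [PartialOrder L] {X Y : FilteredComplex K L}

/-- A linear map that raises degrees by `k` and does not increase weights. -/
def IsFiltered (X Y : FilteredComplex K L) (k : ℕ)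
    (φ : (X.Cell →₀ K) →ₗ[K] (Y.Cell →₀ K)) : Prop :=
  ∀ b, φ (single b 1) ∈ supported K K {c | Y.dim c = X.dim b + k ∧ Y.wt c ≤ X.wt b}

theorem IsFiltered.map_mem {k n n' : ℕ} {φ : (X.Cell →₀ K) →ₗ[K] (Y.Cell →₀ K)}
    (hφ : IsFiltered X Y k φ) {S : Set L} (hS : IsLowerSet S) (hn : n' = n + k)
    {x : X.Cell →₀ K} (hx : x ∈ supported K K {c | X.dim c = n ∧ X.wt c ∈ S}) :
    φ x ∈ supported K K {c | Y.dim c = n' ∧ Y.wt c ∈ S} := by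
  refine map_mem_supported φ (fun b hb => ?_) hx
  exact mem_supported_of_mem_supported (hφ b) fun _ hc =>
    ⟨by rw [hc.1, hb.1, hn], hS hc.2 hb.2⟩

theorem IsFiltered.map_mem_wt {k : ℕ} {φ : (X.Cell →₀ K) →ₗ[K] (Y.Cell →₀ K)}
    (hφ : IsFiltered X Y k φ) {S : Set L} (hS : IsLowerSet S)
    {x : X.Cell →₀ K} (hx : x ∈ supported K K {c | X.wt c ∈ S}) :
    φ x ∈ supported K K {c | Y.wt c ∈ S} :=
  map_mem_supported φ (fun b hb => mem_supported_of_mem_supported (hφ b) fun _ hc =>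
    hS hc.2 hb) hx

variable [OrderBot L]

theorem exists_chainMap {e : X.Cell} (hX : X.IsResolution e) {f : Y.Cell}
    (hY : Y.IsResolution f) :
    ∃ φ : (X.Cell →₀ K) →ₗ[K] (Y.Cell →₀ K), φ (single e 1) = single f 1 ∧
      IsFiltered X Y 0 φ ∧ ∀ x, Y.d (φ x) = φ (X.d x) := by
  obtain ⟨s, hs₀, hs, hds⟩ := exists_lift hX hY 1 0 0 (fun b => by simp) (fun x => by simp)
    (single f 1) (single_one_mem_supported ⟨hY.dim_base, hY.wt_base.le⟩)
    (by rw [hY.d_base]; simp)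
  exact ⟨s, hs₀, hs, fun x => by simpa using hds x⟩

theorem exists_homotopy {e : X.Cell} (hX : X.IsResolution e) {f : Y.Cell}
    (hY : Y.IsResolution f) {φ ψ : (X.Cell →₀ K) →ₗ[K] (Y.Cell →₀ K)}
    (hφ : IsFiltered X Y 0 φ) (hψ : IsFiltered X Y 0 ψ)
    (hdφ : ∀ x, Y.d (φ x) = φ (X.d x)) (hdψ : ∀ x, Y.d (ψ x) = ψ (X.d x))
    (he : φ (single e 1) = ψ (single e 1)) :
    ∃ s : (X.Cell →₀ K) →ₗ[K] (Y.Cell →₀ K), IsFiltered X Y 1 s ∧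
      ∀ x, Y.d (s x) = φ x - ψ x - s (X.d x) := by
  obtain ⟨s, -, hs, hds⟩ := exists_lift hX hY (-1) 1 (φ - ψ)
    (fun b => by
      refine mem_supported_of_mem_supported (sub_mem (hφ b) (hψ b)) fun c hc => ⟨?_, hc.2⟩
      rw [hc.1, add_zero])
    (fun x => by simp [hdφ, hdψ]) 0 (zero_mem _) (by simp [he])
  refine ⟨s, hs, fun x => ?_⟩
  rw [hds, LinearMap.sub_apply, neg_one_smul, sub_eq_add_neg (φ x - ψ x)]

theorem Acyclic.transfer {e : X.Cell} (hX : X.IsResolution e) {f : Y.Cell}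
    (hY : Y.IsResolution f) {m : L} {n : ℕ} (h : X.Acyclic m n) : Y.Acyclic m n := by
  intro z hz hdz
  obtain ⟨κ, hκ₀, hκ, hdκ⟩ := exists_chainMap hY hX
  obtain ⟨ν, hν₀, hν, hdν⟩ := exists_chainMap hX hY
  have hνκ : IsFiltered Y Y 0 (ν ∘ₗ κ) := fun b =>
    hν.map_mem (S := Set.Iic (Y.wt b)) (isLowerSet_Iic _) rfl (hκ b)
  obtain ⟨r, hr, hdr⟩ := exists_homotopy (φ := ν ∘ₗ κ) (ψ := LinearMap.id) hY hY hνκ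
    (fun b => single_one_mem_supported ⟨rfl, le_rfl⟩)
    (fun x => by simp [hdκ, hdν]) (fun x => rfl) (by simp [hκ₀, hν₀])
  have hS : IsLowerSet (Set.Iio m) := isLowerSet_Iio m
  obtain ⟨y, hy, hdy⟩ := h (κ z) (hκ.map_mem hS rfl hz) (by rw [hdκ, hdz, map_zero])
  refine ⟨ν y - r z, sub_mem (hν.map_mem hS rfl hy) (hr.map_mem hS rfl hz), ?_⟩
  rw [map_sub, hdν, hdy, hdr, hdz, map_zero]
  simp

/-- Two cells of the same weight that are joined by the differential can be cancelled. -/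
theorem IsResolution.exists_card_lt {e : X.Cell} (hX : X.IsResolution e) {b₁ b₂ : X.Cell}
    (hwt : X.wt b₁ = X.wt b₂) (hne : X.d (single b₁ 1) b₂ ≠ 0) :
    ∃ (Y : FilteredComplex K L) (f : Y.Cell), Y.IsResolution f ∧
      Nat.card Y.Cell < Nat.card X.Cell := by
  classical
  have := X.finite
  set v := X.d (single b₁ 1) with hv
  have hvs : ∀ a, v a ≠ 0 → X.dim a + 1 = X.dim b₁ ∧ X.wt a ≤ X.wt b₁ :=
    mem_supported_iff_forall_ne.1 (X.d_single b₁)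
  have hdim : X.dim b₂ + 1 = X.dim b₁ := (hvs b₂ hne).1
  have hb₁ : b₁ ≠ e := by
    rintro rfl
    exact hne (by rw [hv, hX.d_base, Finsupp.zero_apply])
  have hb₂ : b₂ ≠ e := by
    rintro rfl
    have := (hX.pos b₁ hb₁).2
    rw [hwt, hX.wt_base] at this
    exact lt_irrefl _ this
  have hb₁₂ : b₁ ≠ b₂ := by
    rintro rfl
    omega
  have hv₁ : v b₁ = 0 := by
    by_contra h
    have := (hvs b₁ h).1
    omega
  let A : Set X.Cell := {b | b ≠ b₁ ∧ b ≠ b₂}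
  let i : (A →₀ K) →ₗ[K] (X.Cell →₀ K) := lmapDomain K K Subtype.val
  let p : (X.Cell →₀ K) →ₗ[K] (A →₀ K) :=
    lsubtypeDomain A ∘ₗ (LinearMap.id - ((v b₂)⁻¹ • lapply b₂).smulRight v)
  have hi : ∀ x (a : A), i x a = x a := fun x a => mapDomain_apply Subtype.val_injective x a
  have hi' : ∀ x, ∀ b ∉ A, i x b = 0 := fun x b hb =>
    mapDomain_of_notMem_range x b (by simpa using hb)
  have hp : ∀ x (a : A), p x a = x a - (v b₂)⁻¹ * x b₂ * v a := fun x a => by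
    simp [p, lsubtypeDomain_apply]
  have hb₁A : b₁ ∉ A := fun h => h.1 rfl
  have hb₂A : b₂ ∉ A := fun h => h.2 rfl
  have hip : ∀ x, i (p x) = x - x b₁ • single b₁ 1 - ((v b₂)⁻¹ * x b₂) • v := by
    intro x
    ext b
    by_cases hb : b ∈ A
    · have := hi (p x) ⟨b, hb⟩
      rw [hp] at this
      simp [this, hb.1]
    · rw [hi' _ _ hb]
      rcases eq_or_ne b b₁ with rfl | h₁
      · simp [hv₁]
      · have : b = b₂ := by
          by_contra h₂
          exact hb ⟨h₁, h₂⟩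
        subst this
        have h : (v b)⁻¹ * x b * v b = x b := by field_simp
        simp [h₁, h]
  have hpi : ∀ x, p (i x) = x := fun x => by
    ext a
    rw [hp, hi, hi' x b₂ hb₂A, mul_zero, zero_mul, sub_zero]
  have hp₁ : p (single b₁ 1) = 0 := by
    ext a
    rw [hp]
    simp [hb₁₂, a.2.1.symm]
  have hpv : p v = 0 := by
    ext a
    rw [hp]
    simp [hne]
  have hpd : ∀ x, p (X.d (i (p x))) = p (X.d x) := by
    intro x
    rw [hip]
    simp only [map_sub, map_smul, ← hv, hpv]
    rw [hv, X.d_d]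
    simp
  have hpS : ∀ {P : ℕ → L → Prop} (_ : ∀ n u u', u' ≤ u → P n u → P n u') {x : X.Cell →₀ K}
      (_ : x ∈ supported K K {c | P (X.dim c) (X.wt c)}),
      p x ∈ supported K K {c : A | P (X.dim c) (X.wt c)} := by
    intro P hP x hx
    rw [mem_supported_iff_forall_ne] at hx ⊢
    intro a ha
    by_cases h : x a = 0
    · rw [hp, h, zero_sub, neg_ne_zero] at ha
      have h₁ := hvs a (right_ne_zero_of_mul ha)
      have h₂ := hx b₂ (right_ne_zero_of_mul (left_ne_zero_of_mul ha))
      have h₃ : X.dim a = X.dim b₂ := by omega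
      show P _ _
      rw [h₃]
      exact hP _ _ _ (h₁.2.trans hwt.le) h₂
    · exact hx a h
  have hiS : ∀ {S : Set X.Cell} {x : A →₀ K} (_ : x ∈ supported K K {c : A | c.1 ∈ S}),
      i x ∈ supported K K S := by
    intro S x hx
    refine map_mem_supported i (fun a ha => ?_) hx
    simp only [i, lmapDomain_apply, mapDomain_single]
    exact single_one_mem_supported ha
  let Y : FilteredComplex K L :=
    { Cell := A
      finite := inferInstance
      dim := fun a => X.dim a
      wt := fun a => X.wt a
      d := p ∘ₗ X.d ∘ₗ i
      d_d := fun x => by simp only [LinearMap.comp_apply, hpd, X.d_d, map_zero]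
      d_single := fun b => by
        refine hpS (P := fun n u => n + 1 = X.dim b ∧ u ≤ X.wt b)
          (fun n u u' h h' => ⟨h'.1, h.trans h'.2⟩) ?_
        have : i (single b 1) = single b.1 1 := by simp [i]
        rw [LinearMap.comp_apply, this]
        exact X.d_single b }
  refine ⟨Y, ⟨e, hb₁.symm, hb₂.symm⟩, ⟨hX.dim_base, hX.wt_base, fun b hb => ?_, ?_⟩,
    Finite.card_subtype_lt hb₁A⟩
  · exact hX.pos b fun h => hb (Subtype.ext h)
  intro u hu x hx hdx
  have hix : i x ∈ supported K K {c | X.wt c ∈ Set.Iic u} := hiS hx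
  set y := X.d (i x) with hy
  have hyS := X.d_mem_wt (isLowerSet_Iic u) hix
  have hy' : y = y b₁ • single b₁ 1 + ((v b₂)⁻¹ * y b₂) • v := by
    have h := hip y
    have h0 : p y = 0 := hdx
    rw [h0, map_zero, sub_sub, eq_comm, sub_eq_zero] at h
    exact h
  have hy₁ : y b₁ = 0 := by
    have h := congrArg X.d hy'
    rw [hy, X.d_d, ← hy, map_add, map_smul, map_smul, ← hv, hv, X.d_d, ← hv, smul_zero,
      add_zero] at h
    have := DFunLike.congr_fun h b₂
    simpa [hne] using this.symm
  rw [hy₁, zero_smul, zero_add] at hy'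
  obtain ⟨w, hw, hdw⟩ := hX.exact u hu (i x - ((v b₂)⁻¹ * y b₂) • single b₁ 1)
    (by
      refine sub_mem hix ?_
      by_cases h : y b₂ = 0
      · rw [h, mul_zero, zero_smul]
        exact zero_mem _
      · refine Submodule.smul_mem _ _ (single_one_mem_supported ?_)
        exact hwt.le.trans (mem_supported_iff_forall_ne.1 hyS _ h))
    (by rw [map_sub, map_smul, ← hy, ← hv, ← hy', sub_self])
  refine ⟨p w, hpS (P := fun _ u' => u' ≤ u) (fun _ _ _ h h' => h.trans h') hw, ?_⟩
  show p (X.d (i (p w))) = x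
  rw [hpd, hdw, map_sub, map_smul, hp₁, hpi, smul_zero, sub_zero]

/-- The differential strictly decreases weights. -/
def IsMinimal (X : FilteredComplex K L) : Prop :=
  ∀ b, X.d (single b 1) ∈ supported K K {c | X.dim c + 1 = X.dim b ∧ X.wt c < X.wt b}

theorem IsResolution.exists_isMinimal {e : X.Cell} (hX : X.IsResolution e) :
    ∃ (F : FilteredComplex K L) (f : F.Cell), F.IsResolution f ∧ F.IsMinimal := by
  induction hN : Nat.card X.Cell using Nat.strong_induction_on generalizing X with
  | _ N ih =>
    by_cases h : ∃ b₁ b₂, X.wt b₁ = X.wt b₂ ∧ X.d (single b₁ 1) b₂ ≠ 0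
    · obtain ⟨b₁, b₂, hwt, hne⟩ := h
      obtain ⟨Y, f, hY, hlt⟩ := hX.exists_card_lt hwt hne
      exact ih _ (hN ▸ hlt) hY rfl
    · push Not at h
      refine ⟨X, e, hX, fun b => mem_supported_iff_forall_ne.2 fun c hc => ?_⟩
      have hbc := mem_supported_iff_forall_ne.1 (X.d_single b) c hc
      exact ⟨hbc.1, lt_of_le_of_ne hbc.2 fun h' => hc (h b c h'.symm)⟩

theorem IsMinimal.not_acyclic {e : X.Cell} (hX : X.IsResolution e) (hmin : X.IsMinimal)
    {b : X.Cell} {n : ℕ} (hb : X.dim b = n + 1) : ¬ X.Acyclic (X.wt b) n := by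
  intro h
  have hbe : b ≠ e := by
    rintro rfl
    rw [hX.dim_base] at hb
    omega
  obtain ⟨y, hy, hdy⟩ := h (X.d (single b 1))
    (mem_supported_of_mem_supported (hmin b) fun c hc => ⟨by have := hc.1; omega, hc.2⟩)
    (X.d_d _)
  obtain ⟨w, hw, hdw⟩ := hX.exact (X.wt b) (hX.pos b hbe).2 (single b 1 - y)
    (sub_mem (single_one_mem_supported le_rfl)
      (mem_supported_of_mem_supported hy fun c hc => hc.2.le))
    (by rw [map_sub, hdy, sub_self])
  have hw' : X.d w ∈ supported K K {c | X.wt c < X.wt b} :=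
    map_mem_supported X.d (fun c hc => mem_supported_of_mem_supported (hmin c)
      fun c' hc' => hc'.2.trans_le hc) hw
  rw [hdw] at hw'
  refine lt_irrefl _ (mem_supported_iff_forall_ne.1 hw' b ?_)
  have hyb : y b = 0 := by
    by_contra hyb
    exact lt_irrefl _ (mem_supported_iff_forall_ne.1 hy b hyb).2
  simp [hyb]

end FilteredComplex

end ComparisonMaps

section TensorProducts

variable {K} {A B A' B' : Type}

/-- The product of two vectors, as a bilinear map. -/
def box : (A →₀ K) →ₗ[K] (B →₀ K) →ₗ[K] (A × B →₀ K) :=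
  (TensorProduct.mk K _ _).compr₂ (finsuppTensorFinsupp' K A B).toLinearMap

/-- The tensor product of two linear maps. -/
def boxMap (φ : (A →₀ K) →ₗ[K] (A' →₀ K)) (ψ : (B →₀ K) →ₗ[K] (B' →₀ K)) :
    (A × B →₀ K) →ₗ[K] (A' × B' →₀ K) :=
  (finsuppTensorFinsupp' K A' B').toLinearMap ∘ₗ TensorProduct.map φ ψ ∘ₗ
    (finsuppTensorFinsupp' K A B).symm.toLinearMap

theorem boxMap_box (φ : (A →₀ K) →ₗ[K] (A' →₀ K)) (ψ : (B →₀ K) →ₗ[K] (B' →₀ K))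
    (x : A →₀ K) (y : B →₀ K) : boxMap φ ψ (box x y) = box (φ x) (ψ y) := by
  simp [boxMap, box]

theorem box_single (a : A) (b : B) : box (single a (1 : K)) (single b 1) = single (a, b) 1 := by
  simp [box]

theorem box_mem_supported {S : Set A} {T : Set B} {x : A →₀ K} {y : B →₀ K}
    (hx : x ∈ supported K K S) (hy : y ∈ supported K K T) :
    box x y ∈ supported K K (S ×ˢ T) := by
  rw [mem_supported_iff_forall_ne] at *
  rintro ⟨a, b⟩ hab
  have h : box x y (a, b) = x a * y b := by simp [box]
  rw [h] at hab
  exact ⟨hx a (left_ne_zero_of_mul hab), hy b (right_ne_zero_of_mul hab)⟩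

theorem linearMap_ext_single {M : Type} [AddCommGroup M] [Module K M]
    {φ ψ : (A →₀ K) →ₗ[K] M} (h : ∀ a, φ (single a 1) = ψ (single a 1)) (x : A →₀ K) :
    φ x = ψ x :=
  eq_of_mem_supported φ ψ (S := Set.univ) (fun a _ => h a) (by simp)

/-- An exact endomorphism of a vector space is contractible. -/
theorem exists_contraction_of_exact {W : Type} [AddCommGroup W] [Module K W] (δ : W →ₗ[K] W)
    (hδδ : ∀ x, δ (δ x) = 0) (hex : ∀ x, δ x = 0 → ∃ y, δ y = x) :
    ∃ η : W →ₗ[K] W, ∀ x, δ (η x) + η (δ x) = x := by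
  obtain ⟨g, hg⟩ := δ.rangeRestrict.exists_rightInverse_of_surjective δ.range_rangeRestrict
  have hg' : ∀ x, δ (g x) = x := fun x => congrArg Subtype.val (LinearMap.congr_fun hg x)
  let q : W →ₗ[K] W := LinearMap.id - g ∘ₗ δ.rangeRestrict
  have hq : ∀ x, q x ∈ LinearMap.range δ := fun x => hex _ (by simp [q, hg'])
  refine ⟨g ∘ₗ q.codRestrict _ hq, fun x => ?_⟩
  have h₁ : δ (g (q.codRestrict _ hq x)) = q x := hg' _
  have h₂ : q.codRestrict _ hq (δ x) = δ.rangeRestrict x := by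
    have : δ.rangeRestrict (δ x) = 0 := Subtype.ext (hδδ _)
    refine Subtype.ext ?_
    simp [q, this]
  rw [LinearMap.comp_apply, LinearMap.comp_apply, h₁, h₂]
  simp [q]

namespace FilteredComplex

variable {L : Type}

section Sign

variable [PartialOrder L] (X : FilteredComplex K L)

/-- The sign of the degree. -/
def sign : (X.Cell →₀ K) →ₗ[K] (X.Cell →₀ K) :=
  linearCombination K fun b => (-1 : K) ^ X.dim b • single b 1

theorem sign_single (b : X.Cell) : X.sign (single b 1) = (-1 : K) ^ X.dim b • single b 1 := by
  simp [sign]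

theorem sign_sign (x : X.Cell →₀ K) : X.sign (X.sign x) = x := by
  refine linearMap_ext_single (φ := X.sign ∘ₗ X.sign) (ψ := LinearMap.id) (fun b => ?_) x
  rw [LinearMap.comp_apply, sign_single, map_smul, sign_single, smul_smul, ← mul_pow]
  simp

theorem d_sign (x : X.Cell →₀ K) : X.d (X.sign x) = -X.sign (X.d x) := by
  refine linearMap_ext_single (φ := X.d ∘ₗ X.sign) (ψ := -(X.sign ∘ₗ X.d)) (fun b => ?_) x
  rw [LinearMap.comp_apply, sign_single, map_smul, LinearMap.neg_apply, LinearMap.comp_apply]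
  have h : X.sign (X.d (single b 1)) = -((-1 : K) ^ X.dim b • X.d (single b 1)) := by
    refine eq_of_mem_supported X.sign (-((-1 : K) ^ X.dim b • LinearMap.id)) (fun c hc => ?_)
      (X.d_single b)
    rw [sign_single, ← hc.1, pow_succ]
    simp
  rw [h, neg_neg]

end Sign

variable [SemilatticeSup L] (X Y : FilteredComplex K L)

/-- The differential of the tensor product. -/
def tensorD : (X.Cell × Y.Cell →₀ K) →ₗ[K] (X.Cell × Y.Cell →₀ K) :=
  boxMap X.d Y.sign + boxMap LinearMap.id Y.d

theorem tensorD_box (x : X.Cell →₀ K) (y : Y.Cell →₀ K) :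
    X.tensorD Y (box x y) = box (X.d x) (Y.sign y) + box x (Y.d y) := by
  simp [tensorD, boxMap_box]

theorem tensorD_tensorD (x : X.Cell × Y.Cell →₀ K) : X.tensorD Y (X.tensorD Y x) = 0 := by
  refine linearMap_ext_single (φ := X.tensorD Y ∘ₗ X.tensorD Y) (ψ := 0) (fun b => ?_) x
  rw [← box_single, LinearMap.comp_apply, tensorD_box, map_add, tensorD_box, tensorD_box]
  simp [X.d_d, Y.d_d, Y.d_sign]

theorem tensorD_single (b : X.Cell × Y.Cell) : X.tensorD Y (single b 1) ∈ supported K K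
    {c | (X.dim c.1 + 1 = X.dim b.1 ∧ Y.dim c.2 = Y.dim b.2 ∨
        X.dim c.1 = X.dim b.1 ∧ Y.dim c.2 + 1 = Y.dim b.2) ∧
      X.wt c.1 ⊔ Y.wt c.2 ≤ X.wt b.1 ⊔ Y.wt b.2} := by
  rw [← box_single, tensorD_box]
  refine add_mem ?_ ?_
  · rw [sign_single, map_smul]
    refine Submodule.smul_mem _ _ (mem_supported_of_mem_supported (box_mem_supported
      (X.d_single b.1) (single_one_mem_supported (Set.mem_singleton b.2))) ?_)
    rintro ⟨c, c'⟩ ⟨⟨h₁, h₂⟩, rfl⟩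
    exact ⟨Or.inl ⟨h₁, rfl⟩, sup_le_sup_right h₂ _⟩
  · refine mem_supported_of_mem_supported (box_mem_supported
      (single_one_mem_supported (Set.mem_singleton b.1)) (Y.d_single b.2)) ?_
    rintro ⟨c, c'⟩ ⟨rfl, ⟨h₁, h₂⟩⟩
    exact ⟨Or.inr ⟨rfl, h₁⟩, sup_le_sup_left h₂ _⟩

/-- The tensor product of two filtered complexes; weights are joined. -/
def tensor : FilteredComplex K L where
  Cell := X.Cell × Y.Cell
  finite := by
    have := X.finite
    have := Y.finite
    infer_instance
  dim c := X.dim c.1 + Y.dim c.2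
  wt c := X.wt c.1 ⊔ Y.wt c.2
  d := X.tensorD Y
  d_d := X.tensorD_tensorD Y
  d_single b := by
    refine mem_supported_of_mem_supported (X.tensorD_single Y b) fun c hc => ⟨?_, hc.2⟩
    have := hc.1
    omega

variable [OrderBot L] {X Y}

theorem IsResolution.exists_contraction {e : X.Cell} (hX : X.IsResolution e) {u : L}
    (hu : ⊥ < u) : ∃ h : (X.Cell →₀ K) →ₗ[K] (X.Cell →₀ K),
      ∀ x ∈ supported K K {c | X.wt c ∈ Set.Iic u}, h x ∈ supported K K {c | X.wt c ∈ Set.Iic u} ∧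
        X.d (h x) + h (X.d x) = x := by
  set W := supported K K {c | X.wt c ∈ Set.Iic u}
  have hdW : ∀ x ∈ W, X.d x ∈ W := fun x hx => X.d_mem_wt (isLowerSet_Iic u) hx
  let δ : W →ₗ[K] W := X.d.restrict hdW
  have hδδ : ∀ x, δ (δ x) = 0 := fun x => Subtype.ext (X.d_d x)
  obtain ⟨η, hη'⟩ := exists_contraction_of_exact (W := ↥W) δ hδδ fun x hx => by
    obtain ⟨y, hy, hdy⟩ := hX.exact u hu x x.2 (congrArg Subtype.val hx)
    exact ⟨⟨y, hy⟩, Subtype.ext hdy⟩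
  obtain ⟨h, hh⟩ := (W.subtype ∘ₗ η).exists_extend
  have hη : ∀ x : W, h x = η x := fun x => LinearMap.congr_fun hh x
  refine ⟨h, fun x hx => ?_⟩
  have h₁ := hη ⟨x, hx⟩
  have h₂ := hη (δ ⟨x, hx⟩)
  refine ⟨by rw [h₁]; exact (η _).2, ?_⟩
  have h₃ := congrArg Subtype.val (hη' ⟨x, hx⟩)
  rw [h₁]
  exact (congrArg (X.d (η ⟨x, hx⟩) + ·) h₂).trans h₃

theorem IsResolution.tensorD_exact {e : X.Cell} (hX : X.IsResolution e) {u : L} (hu : ⊥ < u)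
    {x : X.Cell × Y.Cell →₀ K} (hx : x ∈ supported K K {c | X.wt c.1 ⊔ Y.wt c.2 ≤ u})
    (hdx : X.tensorD Y x = 0) :
    ∃ y ∈ supported K K {c | X.wt c.1 ⊔ Y.wt c.2 ≤ u}, X.tensorD Y y = x := by
  obtain ⟨h, hh⟩ := hX.exists_contraction hu
  refine ⟨boxMap h Y.sign x, ?_, ?_⟩
  · refine map_mem_supported _ (fun b hb => ?_) hx
    have hb₁ : X.wt b.1 ≤ u := le_sup_left.trans hb
    have hb₂ : Y.wt b.2 ≤ u := le_sup_right.trans hb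
    rw [← box_single, boxMap_box, sign_single, map_smul]
    refine Submodule.smul_mem _ _ (mem_supported_of_mem_supported (box_mem_supported
      (hh _ (single_one_mem_supported hb₁)).1
      (single_one_mem_supported (Set.mem_singleton b.2))) ?_)
    rintro ⟨c, c'⟩ ⟨hc, rfl⟩
    exact sup_le hc hb₂
  · have key : X.tensorD Y (boxMap h Y.sign x) + boxMap h Y.sign (X.tensorD Y x) = x := by
      refine eq_of_mem_supported
        (X.tensorD Y ∘ₗ boxMap h Y.sign + boxMap h Y.sign ∘ₗ X.tensorD Y) LinearMap.id
        (fun b hb => ?_) hx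
      have hb₁ : X.wt b.1 ≤ u := le_sup_left.trans hb
      have hhb := (hh _ (single_one_mem_supported hb₁)).2
      rw [← box_single, LinearMap.add_apply, LinearMap.comp_apply, LinearMap.comp_apply,
        boxMap_box, tensorD_box, tensorD_box, map_add, boxMap_box, boxMap_box, Y.sign_sign,
        Y.d_sign, LinearMap.id_apply]
      conv_rhs => rw [← hhb]
      rw [map_add, LinearMap.add_apply, map_neg]
      abel
    rw [hdx, map_zero, add_zero] at key
    exact key

theorem IsResolution.tensor {e : X.Cell} (hX : X.IsResolution e) {f : Y.Cell}
    (hY : Y.IsResolution f) : (X.tensor Y).IsResolution (e, f) where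
  dim_base := by
    show X.dim e + Y.dim f = 0
    rw [hX.dim_base, hY.dim_base]
  wt_base := by
    show X.wt e ⊔ Y.wt f = ⊥
    rw [hX.wt_base, hY.wt_base, sup_idem]
  pos := by
    rintro ⟨b, c⟩ hbc
    show 0 < X.dim b + Y.dim c ∧ ⊥ < X.wt b ⊔ Y.wt c
    by_cases hb : b = e
    · have hc : c ≠ f := fun hc => hbc (by rw [hb, hc])
      have := hY.pos c hc
      exact ⟨by omega, this.2.trans_le le_sup_right⟩
    · have := hX.pos b hb
      exact ⟨by omega, this.2.trans_le le_sup_left⟩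
  exact := fun _ hu _ hx hdx => hX.tensorD_exact hu hx hdx

end FilteredComplex

end TensorProducts

section Splitting

variable {K} {L : Type} [SemilatticeSup L]

namespace FilteredComplex

variable {X : FilteredComplex K L}

open Classical in
/-- The projection of the tensor product onto the cells whose first factor has degree greater
than `a`. -/
def truncation (X Y : FilteredComplex K L) (a : ℕ) :
    (X.Cell × Y.Cell →₀ K) →ₗ[K] (X.Cell × Y.Cell →₀ K) :=
  linearCombination K fun c => if a < X.dim c.1 then single c 1 else 0

variable {Y : FilteredComplex K L}

theorem truncation_eq_self {a : ℕ} {x : X.Cell × Y.Cell →₀ K}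
    (hx : x ∈ supported K K {c | a < X.dim c.1}) : truncation X Y a x = x :=
  eq_of_mem_supported (truncation X Y a) LinearMap.id
    (fun c (hc : a < X.dim c.1) => by simp [truncation, hc]) hx

theorem truncation_eq_zero {a : ℕ} {x : X.Cell × Y.Cell →₀ K}
    (hx : x ∈ supported K K {c | X.dim c.1 ≤ a}) : truncation X Y a x = 0 :=
  eq_of_mem_supported (truncation X Y a) 0
    (fun c (hc : X.dim c.1 ≤ a) => by simp [truncation, hc.not_gt]) hx

theorem truncation_mem {a : ℕ} {S : Set (X.Cell × Y.Cell)} {x : X.Cell × Y.Cell →₀ K}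
    (hx : x ∈ supported K K S) : truncation X Y a x ∈ supported K K S := by
  refine map_mem_supported _ (fun c hc => ?_) hx
  by_cases h : a < X.dim c.1
  · rw [truncation_eq_self (single_one_mem_supported h)]
    exact single_one_mem_supported hc
  · rw [truncation_eq_zero (single_one_mem_supported (not_lt.1 h))]
    exact zero_mem _

theorem sub_truncation_mem (a : ℕ) (x : X.Cell × Y.Cell →₀ K) :
    x - truncation X Y a x ∈ supported K K {c | X.dim c.1 ≤ a} := by
  refine map_mem_supported (S := Set.univ) (LinearMap.id - truncation X Y a) (fun c _ => ?_)
    (by simp)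
  rw [LinearMap.sub_apply, LinearMap.id_apply]
  by_cases h : a < X.dim c.1
  · rw [truncation_eq_self (single_one_mem_supported h), sub_self]
    exact zero_mem _
  · rw [truncation_eq_zero (single_one_mem_supported (not_lt.1 h)), sub_zero]
    exact single_one_mem_supported (not_lt.1 h)

/-- The commutator of the differential with the truncation is supported in a single bidegree. -/
theorem tensorD_truncation_sub_mem {a b : ℕ} {m : L} {x : X.Cell × Y.Cell →₀ K}
    (hx : x ∈ supported K K {c | X.dim c.1 + Y.dim c.2 = a + b + 1 ∧
      X.wt c.1 ⊔ Y.wt c.2 ≤ m}) :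
    X.tensorD Y (truncation X Y a x) - truncation X Y a (X.tensorD Y x) ∈
      supported K K {c | (X.dim c.1 = a ∧ Y.dim c.2 = b) ∧ X.wt c.1 ⊔ Y.wt c.2 ≤ m} := by
  refine map_mem_supported
    (X.tensorD Y ∘ₗ truncation X Y a - truncation X Y a ∘ₗ X.tensorD Y) (fun c hc => ?_) hx
  have hD := X.tensorD_single Y c
  rw [LinearMap.sub_apply, LinearMap.comp_apply, LinearMap.comp_apply]
  by_cases h : a < X.dim c.1
  · rw [truncation_eq_self (single_one_mem_supported h), mem_supported_iff_forall_ne]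
    intro q hq
    have h₁ := mem_supported_iff_forall_ne.1 (sub_truncation_mem a _) q hq
    have h₂ := mem_supported_iff_forall_ne.1 (sub_mem hD (truncation_mem hD)) q hq
    simp only [Set.mem_ofPred_eq] at h₁ h₂ hc
    exact ⟨by omega, h₂.2.trans hc.2⟩
  · rw [truncation_eq_zero (single_one_mem_supported (not_lt.1 h)), truncation_eq_zero
      (mem_supported_of_mem_supported hD fun q hq => ?_)]
    · simp
    · simp only [Set.mem_ofPred_eq] at hq ⊢
      omega

variable [OrderBot L]

/-- If the chains of weight less than `m` have homology in degree `a + b + 1`, then `m` is the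
join of two weights at which there is homology in degrees `a` and `b`. -/
theorem IsResolution.acyclic_of_forall_sup_eq {e : X.Cell} (hX : X.IsResolution e) {m : L}
    (hm : ⊥ < m) (a b : ℕ)
    (h : ∀ x y, ⊥ < x → ⊥ < y → x ⊔ y = m → X.Acyclic x a ∨ X.Acyclic y b) :
    X.Acyclic m (a + b + 1) := by
  obtain ⟨F, f, hF, hmin⟩ := hX.exists_isMinimal
  have hT := hF.tensor hF
  obtain ⟨κ, hκ₀, hκ, hdκ⟩ := exists_chainMap hX hF
  obtain ⟨μ, hμ₀, hμ, hdμ⟩ : ∃ μ : (F.Cell × F.Cell →₀ K) →ₗ[K] (X.Cell →₀ K),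
      μ (single (f, f) 1) = single e 1 ∧ IsFiltered (F.tensor F) X 0 μ ∧
      ∀ x, X.d (μ x) = μ (F.tensorD F x) :=
    exists_chainMap hT hX
  let j₁ : (X.Cell →₀ K) →ₗ[K] (F.Cell × F.Cell →₀ K) := box.flip (single f 1) ∘ₗ κ
  let j₂ : (X.Cell →₀ K) →ₗ[K] (F.Cell × F.Cell →₀ K) := box (single f 1) ∘ₗ κ
  have hj₁ : IsFiltered X (F.tensor F) 0 j₁ := fun c => by
    refine mem_supported_of_mem_supported (box_mem_supported (hκ c)
      (single_one_mem_supported (Set.mem_singleton f))) ?_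
    rintro ⟨q, q'⟩ ⟨⟨h₁, h₂⟩, rfl⟩
    refine ⟨?_, sup_le h₂ (hF.wt_base.le.trans bot_le)⟩
    show F.dim q + F.dim q' = _
    rw [hF.dim_base, ← h₁, add_zero]
  have hj₂ : IsFiltered X (F.tensor F) 0 j₂ := fun c => by
    refine mem_supported_of_mem_supported (box_mem_supported
      (single_one_mem_supported (Set.mem_singleton f)) (hκ c)) ?_
    rintro ⟨q, q'⟩ ⟨rfl, ⟨h₁, h₂⟩⟩
    refine ⟨?_, sup_le (hF.wt_base.le.trans bot_le) h₂⟩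
    show F.dim q + F.dim q' = _
    rw [hF.dim_base, ← h₁, zero_add]
  have hdj₁ : ∀ x, F.tensorD F (j₁ x) = j₁ (X.d x) := fun x => by
    show F.tensorD F (box (κ x) (single f 1)) = box (κ (X.d x)) (single f 1)
    rw [tensorD_box, hF.d_base, sign_single, hF.dim_base, hdκ]
    simp
  have hdj₂ : ∀ x, F.tensorD F (j₂ x) = j₂ (X.d x) := fun x => by
    show F.tensorD F (box (single f 1) (κ x)) = box (single f 1) (κ (X.d x))
    rw [tensorD_box, hF.d_base, hdκ]
    simp
  have hj₁₀ : j₁ (single e 1) = single (f, f) 1 := by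
    show box (κ (single e 1)) (single f 1) = _
    rw [hκ₀, box_single]
  have hj₂₀ : j₂ (single e 1) = single (f, f) 1 := by
    show box (single f 1) (κ (single e 1)) = _
    rw [hκ₀, box_single]
  obtain ⟨s, hs, hds⟩ : ∃ s : (X.Cell →₀ K) →ₗ[K] (F.Cell × F.Cell →₀ K),
      IsFiltered X (F.tensor F) 1 s ∧ ∀ x, F.tensorD F (s x) = j₁ x - j₂ x - s (X.d x) :=
    exists_homotopy hX hT hj₁ hj₂ hdj₁ hdj₂ (hj₁₀.trans hj₂₀.symm)
  have hμj : IsFiltered X X 0 (μ ∘ₗ j₁) := fun b =>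
    hμ.map_mem (S := Set.Iic (X.wt b)) (isLowerSet_Iic _) rfl (hj₁ b)
  obtain ⟨r, hr, hdr⟩ := exists_homotopy (φ := μ ∘ₗ j₁) (ψ := LinearMap.id) hX hX hμj
    (fun b => single_one_mem_supported ⟨rfl, le_rfl⟩)
    (fun x => (hdμ _).trans (congrArg μ (hdj₁ x))) (fun x => rfl)
    ((congrArg μ hj₁₀).trans hμ₀)
  have hle : IsLowerSet (Set.Iic m) := isLowerSet_Iic m
  have hlt : IsLowerSet (Set.Iio m) := isLowerSet_Iio m
  intro z hz hdz
  obtain ⟨y, hy, hdy⟩ := hX.exists_primitive hm (n := a + b + 2) (x := z)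
    (mem_supported_of_mem_supported hz fun c hc =>
      ⟨by have := hc.1; omega, hc.2.le⟩) hdz
  have hw : s y ∈ supported K K {c | F.dim c.1 + F.dim c.2 = a + 1 + (b + 1) + 1 ∧
      F.wt c.1 ⊔ F.wt c.2 ≤ m} := hs.map_mem hle (n' := (a + 1) + (b + 1) + 1) (by omega) hy
  have hcomm := tensorD_truncation_sub_mem (a := a + 1) (b := b + 1) hw
  have hds' : F.tensorD F (s y) = j₁ y - j₂ y - s z := by
    rw [hds, hdy]
  rw [hds', map_sub, map_sub] at hcomm
  have hy₁ : truncation F F (a + 1) (j₁ y) = j₁ y := by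
    refine truncation_eq_self ?_
    refine map_mem_supported j₁ (fun c hc => ?_) hy
    refine mem_supported_of_mem_supported (box_mem_supported (hκ c)
      (single_one_mem_supported (Set.mem_singleton f))) ?_
    rintro ⟨q, q'⟩ ⟨⟨h₁, h₂⟩, rfl⟩
    have h₃ : F.dim q = X.dim c + 0 := h₁
    have h₄ : X.dim c = a + b + 2 := hc.1
    show a + 1 < F.dim q
    omega
  have hy₂ : truncation F F (a + 1) (j₂ y) = 0 := by
    refine truncation_eq_zero ?_
    refine map_mem_supported j₂ (fun c hc => ?_) hy
    refine mem_supported_of_mem_supported (box_mem_supported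
      (single_one_mem_supported (Set.mem_singleton f)) (hκ c)) ?_
    rintro ⟨q, q'⟩ ⟨rfl, ⟨h₁, h₂⟩⟩
    show F.dim q ≤ a + 1
    rw [hF.dim_base]
    omega
  rw [hy₁, hy₂, sub_zero] at hcomm
  have hsz : truncation F F (a + 1) (s z) ∈
      supported K K {c | F.wt c.1 ⊔ F.wt c.2 ∈ Set.Iio m} :=
    truncation_mem (mem_supported_of_mem_supported (hs.map_mem hlt rfl hz) fun c hc => hc.2)
  set w := truncation F F (a + 1) (s y)
  have hy' : F.tensorD F w - j₁ y ∈ supported K K {c | F.wt c.1 ⊔ F.wt c.2 ∈ Set.Iio m} := by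
    have hcomm' : F.tensorD F w - (j₁ y - truncation F F (a + 1) (s z)) ∈
        supported K K {c | F.wt c.1 ⊔ F.wt c.2 ∈ Set.Iio m} := by
      refine mem_supported_of_mem_supported hcomm ?_
      rintro ⟨c, c'⟩ ⟨⟨h₁, h₂⟩, h₃⟩
      refine lt_of_le_of_ne h₃ fun heq => ?_
      have hc : c ≠ f := by
        rintro rfl
        simp only [hF.dim_base] at h₁
        omega
      have hc' : c' ≠ f := by
        rintro rfl
        simp only [hF.dim_base] at h₂
        omega
      rcases h _ _ (hF.pos c hc).2 (hF.pos c' hc').2 heq with hac | hac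
      · exact hmin.not_acyclic hF h₁ (hac.transfer hX hF)
      · exact hmin.not_acyclic hF h₂ (hac.transfer hX hF)
    have := sub_mem hcomm' hsz
    convert this using 1
    abel
  set v := F.tensorD F w - j₁ y with hv
  have hdv : F.tensorD F v = -j₁ z := by
    rw [hv, map_sub, tensorD_tensorD, hdj₁, hdy, zero_sub]
  have hz' : X.d (-μ v - r z) = z := by
    have h₁ : X.d (μ v) = -μ (j₁ z) := (hdμ v).trans ((congrArg μ hdv).trans (map_neg μ _))
    rw [map_sub, map_neg, h₁, hdr, hdz, map_zero]
    simp
  have hmem : -μ v - r z ∈ supported K K {c | X.wt c ∈ Set.Iio m} :=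
    sub_mem (neg_mem (hμ.map_mem_wt hlt hy'))
      (hr.map_mem_wt hlt (mem_supported_of_mem_supported hz fun c hc => hc.2))
  obtain ⟨y', hy', hdy'⟩ := X.exists_homogeneous_primitive (n := a + b + 1 + 1) hmem
    (by
      rw [hz']
      exact mem_supported_of_mem_supported hz fun c hc => by
        have := hc.1
        show X.dim c + 1 = _
        omega)
  exact ⟨y', hy', hdy'.trans hz'⟩

end FilteredComplex

end Splitting

section ListComplex

variable {K} {α : Type}

variable (K) in
/-- The boundary of a list: the alternating sum of the lists with one entry deleted. -/
def listBd : List α → (List α →₀ K)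
  | [] => 0
  | u :: l => single l 1 - lmapDomain K K (List.cons u) (listBd l)

/-- The linear extension of the boundary of lists. -/
def listD : (List α →₀ K) →ₗ[K] (List α →₀ K) :=
  linearCombination K (listBd K)

theorem listD_single (l : List α) : listD (single l 1) = listBd K l := by
  simp [listD]

theorem listD_single_cons (u : α) (l : List α) :
    listD (single (u :: l) (1 : K)) =
      single l 1 - lmapDomain K K (List.cons u) (listD (single l 1)) := by
  simp [listD_single, listBd]

theorem listD_cons (u : α) (x : List α →₀ K) :
    listD (lmapDomain K K (List.cons u) x) = x - lmapDomain K K (List.cons u) (listD x) := by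
  refine linearMap_ext_single (φ := listD ∘ₗ lmapDomain K K (List.cons u))
    (ψ := LinearMap.id - lmapDomain K K (List.cons u) ∘ₗ listD) (fun l => ?_) x
  rw [LinearMap.comp_apply, lmapDomain_apply, mapDomain_single, listD_single_cons]
  rfl

theorem listD_listD (x : List α →₀ K) : listD (listD x) = 0 := by
  refine linearMap_ext_single (φ := listD ∘ₗ listD) (ψ := 0) (fun l => ?_) x
  rw [LinearMap.comp_apply, LinearMap.zero_apply]
  induction l with
  | nil => rw [listD_single, listBd, map_zero]
  | cons u l ih => rw [listD_single_cons, map_sub, listD_cons, ih, map_zero, sub_zero, sub_self]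

theorem listD_single_mem (l : List α) : listD (single l (1 : K)) ∈
    supported K K {l' : List α | l'.Sublist l ∧ l'.length + 1 = l.length} := by
  induction l with
  | nil =>
    rw [listD_single, listBd]
    exact zero_mem _
  | cons u l ih =>
    rw [listD_single_cons]
    refine sub_mem (single_one_mem_supported ⟨List.sublist_cons_self u l, rfl⟩)
      (map_mem_supported _ (fun l' hl' => ?_) ih)
    rw [lmapDomain_apply, mapDomain_single]
    exact single_one_mem_supported ⟨hl'.1.cons_cons u, by simp [hl'.2]⟩

theorem listD_ofFn {n : ℕ} (c : Fin (n + 1) → α) :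
    listD (single (List.ofFn c) (1 : K)) =
      ∑ k : Fin (n + 1), (-1 : K) ^ (k : ℕ) • single (List.ofFn (c ∘ k.succAbove)) 1 := by
  induction n with
  | zero => simp [List.ofFn_succ, listD_single, listBd]
  | succ n ih =>
    rw [List.ofFn_succ, listD_single_cons, ih, map_sum, sub_eq_add_neg,
      ← Finset.sum_neg_distrib, Fin.sum_univ_succ (n := n + 1)]
    congr 1
    · simp [Function.comp_def]
    · refine Finset.sum_congr rfl fun k _ => ?_
      rw [map_smul, lmapDomain_apply, mapDomain_single, ← neg_smul, List.ofFn_succ (n := n),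
        Fin.val_succ, pow_succ, mul_neg_one]
      simp [Function.comp_def]

section Cone

variable {L : Type} [Preorder L]

open Classical in
/-- Put `u` in front of the lists with all entries less than `u`. -/
def listCone (u : L) : (List L →₀ K) →ₗ[K] (List L →₀ K) :=
  linearCombination K fun l => if ∀ x ∈ l, x < u then single (u :: l) 1 else 0

theorem listCone_single_of_lt {u : L} {l : List L} (h : ∀ x ∈ l, x < u) :
    listCone u (single l (1 : K)) = single (u :: l) 1 := by
  simp only [listCone, linearCombination_single, if_pos h, one_smul]

theorem listCone_single_cons (u : L) (l : List L) :
    listCone u (single (u :: l) (1 : K)) = 0 := by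
  have h : ¬ ∀ x ∈ u :: l, x < u := fun h => lt_irrefl u (h u List.mem_cons_self)
  simp only [listCone, linearCombination_single, if_neg h, smul_zero]

theorem listCone_listD_of_lt {u : L} {l : List L} (h : ∀ x ∈ l, x < u) :
    listCone u (listD (single l (1 : K))) =
      lmapDomain K K (List.cons u) (listD (single l 1)) := by
  refine eq_of_mem_supported _ _ (fun l' hl' => ?_) (listD_single_mem l)
  rw [listCone_single_of_lt fun x hx => h x (hl'.1.subset hx), lmapDomain_apply,
    mapDomain_single]

theorem listCone_cons (u : L) (x : List L →₀ K) :
    listCone u (lmapDomain K K (List.cons u) x) = 0 := by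
  refine linearMap_ext_single (φ := listCone u ∘ₗ lmapDomain K K (List.cons u)) (ψ := 0)
    (fun l => ?_) x
  rw [LinearMap.comp_apply, lmapDomain_apply, mapDomain_single, listCone_single_cons,
    LinearMap.zero_apply]

end Cone

variable {L : Type} [SemilatticeSup L] [OrderBot L]

/-- Strictly decreasing lists of elements greater than `⊥`. -/
def IsPosChain (l : List L) : Prop := l.Pairwise (· > ·) ∧ ∀ x ∈ l, ⊥ < x

theorem IsPosChain.sublist {l l' : List L} (h : IsPosChain l) (hl : l'.Sublist l) :
    IsPosChain l' :=
  ⟨h.1.sublist hl, fun x hx => h.2 x (hl.subset hx)⟩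

theorem IsPosChain.cons {u : L} {l : List L} (h : IsPosChain l) (hu : ⊥ < u)
    (hl : ∀ x ∈ l, x < u) : IsPosChain (u :: l) :=
  ⟨List.pairwise_cons.2 ⟨hl, h.1⟩, List.forall_mem_cons.2 ⟨hu, h.2⟩⟩

/-- The join of the entries of a list. -/
def listSup (l : List L) : L := l.foldr (· ⊔ ·) ⊥

theorem listSup_le {l : List L} {u : L} : listSup l ≤ u ↔ ∀ x ∈ l, x ≤ u := by
  induction l with
  | nil => simp [listSup]
  | cons a l ih =>
    rw [List.forall_mem_cons, ← ih]
    exact sup_le_iff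

theorem IsPosChain.listSup_lt {l : List L} (h : IsPosChain l) {m : L} (hm : ⊥ < m) :
    listSup l < m ↔ ∀ x ∈ l, x < m := by
  refine ⟨fun hlt x hx => (listSup_le.1 le_rfl x hx).trans_lt hlt, fun hlt => ?_⟩
  cases l with
  | nil => exact hm
  | cons a l =>
    refine lt_of_le_of_lt ?_ (hlt a List.mem_cons_self)
    rw [listSup_le]
    intro x hx
    rcases List.mem_cons.1 hx with rfl | hx
    · exact le_rfl
    · exact (List.rel_of_pairwise_cons h.1 hx).le

variable (K) in
/-- Vectors on strictly decreasing positive lists as vectors on lists. -/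
def chainIncl : ({l : List L // IsPosChain l} →₀ K) →ₗ[K] (List L →₀ K) :=
  lmapDomain K K Subtype.val

variable (K) in
/-- The restriction of vectors on lists to strictly decreasing positive lists. -/
def chainRestr : (List L →₀ K) →ₗ[K] ({l : List L // IsPosChain l} →₀ K) :=
  lsubtypeDomain {l : List L | IsPosChain l}

theorem chainIncl_injective : Function.Injective (chainIncl K (L := L)) :=
  mapDomain_injective Subtype.val_injective

theorem chainIncl_single (l : {l : List L // IsPosChain l}) :
    chainIncl K (single l 1) = single l.1 1 :=
  mapDomain_single

theorem chainIncl_chainRestr {x : List L →₀ K} (hx : x ∈ supported K K {l | IsPosChain l}) :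
    chainIncl K (chainRestr K x) = x := by
  ext l
  by_cases hl : IsPosChain l
  · exact mapDomain_apply Subtype.val_injective (chainRestr K x) (⟨l, hl⟩ : {l // IsPosChain l})
  · rw [(mem_supported' K x).1 hx l hl]
    exact mapDomain_of_notMem_range _ _ (by simpa using hl)

theorem chainIncl_mem_iff {S : Set (List L)} {x : {l : List L // IsPosChain l} →₀ K} :
    chainIncl K x ∈ supported K K S ↔ x ∈ supported K K {l | l.1 ∈ S} := by
  refine ⟨fun h => ?_, map_mem_supported _ fun l hl => ?_⟩
  · rw [mem_supported_iff_forall_ne] at h ⊢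
    intro l hl
    refine h l ?_
    rwa [chainIncl, lmapDomain_apply, mapDomain_apply Subtype.val_injective]
  · rw [chainIncl_single]
    exact single_one_mem_supported hl

theorem chainIncl_mem (x : {l : List L // IsPosChain l} →₀ K) :
    chainIncl K x ∈ supported K K {l | IsPosChain l} :=
  chainIncl_mem_iff.2 (mem_supported_iff_forall_ne.2 fun l _ => l.2)

theorem listD_mem_isPosChain {x : List L →₀ K} (hx : x ∈ supported K K {l | IsPosChain l}) :
    listD x ∈ supported K K {l | IsPosChain l} :=
  map_mem_supported _ (fun l (hl : IsPosChain l) =>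
    mem_supported_of_mem_supported (listD_single_mem l) fun _ hl' => hl.sublist hl'.1) hx

theorem chainIncl_restr_listD (x : {l : List L // IsPosChain l} →₀ K) :
    chainIncl K (chainRestr K (listD (chainIncl K x))) = listD (chainIncl K x) :=
  chainIncl_chainRestr (listD_mem_isPosChain (chainIncl_mem x))

variable (K L) in
/-- The complex of chains in `L` without the bottom element. -/
def chainComplex [Finite L] : FilteredComplex K L where
  Cell := {l : List L // IsPosChain l}
  finite := by
    classical
    have := Fintype.ofFinite L
    refine Finite.of_injective (β := {l : List L // l.Nodup})
      (fun l => ⟨l.1, l.2.1.imp fun h => h.ne'⟩) fun l l' h => ?_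
    exact Subtype.ext (Subtype.mk.inj h)
  dim l := l.1.length
  wt l := listSup l.1
  d := chainRestr K ∘ₗ listD ∘ₗ chainIncl K
  d_d x := by
    refine chainIncl_injective ?_
    simp only [LinearMap.comp_apply]
    rw [chainIncl_restr_listD, chainIncl_restr_listD, listD_listD, map_zero]
  d_single b := by
    refine chainIncl_mem_iff (S := {l | l.length + 1 = b.1.length ∧ listSup l ≤ listSup b.1}).1 ?_
    simp only [LinearMap.comp_apply]
    rw [chainIncl_restr_listD, chainIncl_single]
    refine mem_supported_of_mem_supported (listD_single_mem b.1) fun l hl => ⟨hl.2, ?_⟩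
    exact listSup_le.2 fun x hx => listSup_le.1 le_rfl x (hl.1.subset hx)

theorem IsPosChain.lt_or_eq_cons {l : List L} (h : IsPosChain l) {u : L} (hu : ∀ x ∈ l, x ≤ u) :
    (∀ x ∈ l, x < u) ∨ ∃ l', l = u :: l' ∧ ∀ x ∈ l', x < u := by
  cases l with
  | nil => exact Or.inl (by simp)
  | cons a l =>
    have hl : ∀ x ∈ l, x < a := fun x hx => List.rel_of_pairwise_cons h.1 hx
    rcases (hu a List.mem_cons_self).lt_or_eq with ha | rfl
    · refine Or.inl fun x hx => ?_
      rcases List.mem_cons.1 hx with rfl | hx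
      · exact ha
      · exact (hl x hx).trans ha
    · exact Or.inr ⟨l, rfl, hl⟩

theorem listD_listCone {u : L} {x : List L →₀ K}
    (hx : x ∈ supported K K {l | IsPosChain l ∧ listSup l ≤ u}) :
    listD (listCone u x) + listCone u (listD x) = x := by
  refine eq_of_mem_supported (listD ∘ₗ listCone u + listCone u ∘ₗ listD) LinearMap.id
    (fun l hl => ?_) hx
  rw [LinearMap.add_apply, LinearMap.comp_apply, LinearMap.comp_apply, LinearMap.id_apply]
  rcases hl.1.lt_or_eq_cons (listSup_le.1 hl.2) with h | ⟨l, rfl, h⟩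
  · rw [listCone_single_of_lt h, listD_single_cons, listCone_listD_of_lt h, sub_add_cancel]
  · rw [listCone_single_cons, map_zero, zero_add, listD_single_cons, map_sub, listCone_cons,
      sub_zero, listCone_single_of_lt h]

theorem listCone_mem {u : L} (hu : ⊥ < u) {x : List L →₀ K}
    (hx : x ∈ supported K K {l | IsPosChain l ∧ listSup l ≤ u}) :
    listCone u x ∈ supported K K {l | IsPosChain l ∧ listSup l ≤ u} := by
  refine map_mem_supported _ (fun l hl => ?_) hx
  rcases hl.1.lt_or_eq_cons (listSup_le.1 hl.2) with h | ⟨l, rfl, h⟩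
  · rw [listCone_single_of_lt h]
    exact single_one_mem_supported ⟨hl.1.cons hu h, sup_le le_rfl hl.2⟩
  · rw [listCone_single_cons]
    exact zero_mem _

theorem chainComplex_exact {u : L} (hu : ⊥ < u) {x : {l : List L // IsPosChain l} →₀ K}
    (hx : x ∈ supported K K {l | listSup l.1 ≤ u})
    (hdx : chainRestr K (listD (chainIncl K x)) = 0) :
    ∃ y ∈ supported K K {l | listSup l.1 ≤ u}, chainRestr K (listD (chainIncl K y)) = x := by
  have hdx' : listD (chainIncl K x) = 0 := by
    rw [← chainIncl_restr_listD, hdx, map_zero]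
  have hx' : chainIncl K x ∈ supported K K {l | IsPosChain l ∧ listSup l ≤ u} :=
    chainIncl_mem_iff.2 (mem_supported_of_mem_supported hx fun l hl => ⟨l.2, hl⟩)
  have hc := listCone_mem hu hx'
  have hi := chainIncl_chainRestr (mem_supported_of_mem_supported hc fun l hl => hl.1)
  refine ⟨chainRestr K (listCone u (chainIncl K x)), ?_, ?_⟩
  · rw [← hi] at hc
    exact mem_supported_of_mem_supported (chainIncl_mem_iff.1 hc) fun l hl => hl.2
  · refine chainIncl_injective ((chainIncl_restr_listD _).trans ?_)
    have := listD_listCone hx'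
    rwa [hdx', map_zero, add_zero, ← hi] at this

variable (K L) in
theorem chainComplex_isResolution [Finite L] :
    (chainComplex K L).IsResolution ⟨[], List.Pairwise.nil, by simp⟩ where
  dim_base := rfl
  wt_base := rfl
  pos := by
    rintro ⟨l, hl⟩ hne
    cases l with
    | nil => exact absurd rfl hne
    | cons a l =>
      exact ⟨Nat.succ_pos _, (hl.2 a List.mem_cons_self).trans_le
        (listSup_le.1 le_rfl a List.mem_cons_self)⟩
  exact := fun _ hu _ hx hdx => chainComplex_exact hu hx hdx

section OrderChains

variable {P : Type} [Preorder P] {m : L} (g : P ↪o L) (hg : Set.range g = Set.Ioo ⊥ m)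

/-- The order chains of the open interval below `m` as strictly decreasing positive lists. -/
def chainCell (n : ℕ) (c : OChain P n) : {l : List L // IsPosChain l} :=
  ⟨List.ofFn (g ∘ c.1), List.pairwise_ofFn.2 fun _ _ h => g.strictMono (c.2 h),
    List.forall_mem_ofFn_iff.2 fun k =>
      (hg ▸ Set.mem_range_self (c.1 k) : g (c.1 k) ∈ Set.Ioo ⊥ m).1⟩

theorem chainCell_injective (n : ℕ) : Function.Injective (chainCell g hg n) := by
  intro c c' h
  have h' := List.ofFn_injective (congrArg Subtype.val h)
  exact Subtype.ext (funext fun k => g.injective (congrFun h' k))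

theorem range_chainCell (hm : ⊥ < m) (n : ℕ) :
    Set.range (chainCell g hg n) = {l | l.1.length = n ∧ listSup l.1 < m} := by
  ext l
  refine ⟨?_, ?_⟩
  · rintro ⟨c, rfl⟩
    refine ⟨List.length_ofFn, ((chainCell g hg n c).2.listSup_lt hm).2 ?_⟩
    refine List.forall_mem_ofFn_iff.2 fun k => ?_
    exact (hg ▸ Set.mem_range_self (c.1 k) : g (c.1 k) ∈ Set.Ioo ⊥ m).2
  · rintro ⟨rfl, hlt⟩
    have h : ∀ k : Fin l.1.length, ∃ p, g p = l.1.get k := fun k => by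
      have : l.1.get k ∈ Set.range g := by
        rw [hg]
        exact ⟨l.2.2 _ (List.get_mem _ _), (l.2.listSup_lt hm).1 hlt _ (List.get_mem _ _)⟩
      exact this
    choose p hp using h
    refine ⟨⟨p, fun i j hij => ?_⟩, Subtype.ext ?_⟩
    · rw [← g.lt_iff_lt, hp, hp]
      exact List.pairwise_iff_get.1 l.2.1 i j hij
    · have : g ∘ p = l.1.get := funext hp
      show List.ofFn (g ∘ p) = l.1
      rw [this, List.ofFn_get]

variable (K) in
/-- Vectors on order chains as vectors on strictly decreasing positive lists. -/
def chainVec (n : ℕ) : CGrp K P n →ₗ[K] ({l : List L // IsPosChain l} →₀ K) :=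
  lmapDomain K K (chainCell g hg n)

theorem chainVec_injective (n : ℕ) : Function.Injective (chainVec K g hg n) :=
  mapDomain_injective (chainCell_injective g hg n)

theorem range_chainVec (hm : ⊥ < m) (n : ℕ) : LinearMap.range (chainVec K g hg n) =
    supported K K {l | l.1.length = n ∧ listSup l.1 < m} := by
  rw [← range_chainCell g hg hm n, ← Set.image_univ, ← lmapDomain_supported, supported_univ,
    Submodule.map_top]
  rfl

theorem listD_chainVec_zero (x : CGrp K P 0) :
    listD (chainIncl K (chainVec K g hg 0 x)) = 0 := by
  refine linearMap_ext_single (φ := listD ∘ₗ chainIncl K ∘ₗ chainVec K g hg 0) (ψ := 0)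
    (fun c => ?_) x
  simp [chainVec, chainIncl, chainCell, listD_single, listBd]

theorem listD_chainVec (n : ℕ) (x : CGrp K P (n + 1)) :
    listD (chainIncl K (chainVec K g hg (n + 1) x)) =
      chainIncl K (chainVec K g hg n (cbdry K P n x)) := by
  refine linearMap_ext_single (φ := listD ∘ₗ chainIncl K ∘ₗ chainVec K g hg (n + 1))
    (ψ := chainIncl K ∘ₗ chainVec K g hg n ∘ₗ cbdry K P n) (fun c => ?_) x
  have h : cbdry K P n (single c 1) =
      ∑ k : Fin (n + 1), (-1 : K) ^ (k : ℕ) • single (odel P k c) 1 := by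
    simp [cbdry, -smul_single]
  simp only [LinearMap.comp_apply, h, map_sum, map_smul]
  simp only [chainVec, chainIncl, lmapDomain_apply, mapDomain_single]
  exact listD_ofFn _

/-- The chain complex computes the reduced homology of open intervals. -/
theorem cyclesAt_le_boundariesIn_iff [Finite L] (g : P ↪o L) (hg : Set.range g = Set.Ioo ⊥ m)
    (hm : ⊥ < m) (n : ℕ) :
    cyclesAt K P n ≤ boundariesIn K P n ↔ (chainComplex K L).Acyclic m n := by
  have hcyc : ∀ x, x ∈ cyclesAt K P n ↔ listD (chainIncl K (chainVec K g hg n x)) = 0 := by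
    intro x
    cases n with
    | zero => exact iff_of_true trivial (listD_chainVec_zero g hg x)
    | succ n =>
      rw [listD_chainVec]
      refine ⟨fun h => ?_, fun h => ?_⟩
      · rw [show cbdry K P n x = 0 from h, map_zero, map_zero]
      · exact (map_eq_zero_iff _ (chainVec_injective g hg n)).1
          ((map_eq_zero_iff _ chainIncl_injective).1 h)
  have hd : ∀ x : (chainComplex K L).Cell →₀ K,
      chainIncl K ((chainComplex K L).d x) = listD (chainIncl K x) := chainIncl_restr_listD
  refine ⟨fun h z hz hdz => ?_, fun h x hx => ?_⟩
  · have hz' : z ∈ LinearMap.range (chainVec K g hg n) := by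
      rw [range_chainVec g hg hm]
      exact hz
    obtain ⟨x, rfl⟩ := hz'
    obtain ⟨y, hy⟩ := h ((hcyc x).2 ((hd _).symm.trans ((congrArg _ hdz).trans (map_zero _))))
    refine ⟨chainVec K g hg (n + 1) y, ?_, ?_⟩
    · have := LinearMap.mem_range_self (chainVec K g hg (n + 1)) y
      rw [range_chainVec g hg hm] at this
      exact this
    · exact chainIncl_injective ((hd _).trans ((listD_chainVec g hg n y).trans
        (congrArg (fun t => chainIncl K (chainVec K g hg n t)) hy)))
  · have hx' := LinearMap.mem_range_self (chainVec K g hg n) x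
    rw [range_chainVec g hg hm] at hx'
    obtain ⟨y, hy, hdy⟩ := h (chainVec K g hg n x) hx'
      (chainIncl_injective ((hd _).trans (((hcyc x).1 hx).trans (map_zero _).symm)))
    have hy' : y ∈ LinearMap.range (chainVec K g hg (n + 1)) := by
      rw [range_chainVec g hg hm]
      exact hy
    obtain ⟨w, rfl⟩ := hy'
    refine ⟨w, chainVec_injective g hg n (chainIncl_injective ?_)⟩
    exact (listD_chainVec g hg n w).symm.trans ((hd _).symm.trans (congrArg _ hdy))

end OrderChains

end ListComplex

section LcmLattice

variable {K} {nv : ℕ} {I : Ideal (PolyS K nv)}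

theorem minGens_finite : (minGens K nv I).Finite := by
  refine WellQuasiOrderedLE.finite_of_isAntichain fun d hd d' hd' hne hle => ?_
  exact hd'.2 d (lt_of_le_of_ne hle hne) hd.1

theorem lcmSet_finite : (lcmSet K nv I).Finite := by
  classical
  refine (Finset.finite_toSet
    (((minGens_finite (I := I)).toFinset.powerset).image fun B => B.sup id)).subset ?_
  rintro _ ⟨B, hB, rfl⟩
  exact Finset.mem_coe.2 (Finset.mem_image_of_mem _ (Finset.mem_powerset.2 fun d hd =>
    (Set.Finite.mem_toFinset _).2 (hB hd)))

theorem bot_mem_lcmSet : ⊥ ∈ lcmSet K nv I :=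
  ⟨∅, by simp, by simp⟩

theorem sup_mem_lcmSet ⦃x y : Fin nv → ℕ⦄ (hx : x ∈ lcmSet K nv I) (hy : y ∈ lcmSet K nv I) :
    x ⊔ y ∈ lcmSet K nv I := by
  classical
  obtain ⟨B, hB, rfl⟩ := hx
  obtain ⟨C, hC, rfl⟩ := hy
  exact ⟨B ∪ C, by simp [hB, hC], by rw [Finset.sup_union]⟩

instance : SemilatticeSup (lcmSet K nv I) := Subtype.semilatticeSup sup_mem_lcmSet

instance : OrderBot (lcmSet K nv I) := Subtype.orderBot bot_mem_lcmSet

instance : Finite (lcmSet K nv I) := lcmSet_finite.to_subtype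

/-- The inclusion of an open interval into the LCM-lattice. -/
def openIntEmbedding (m : Fin nv → ℕ) : openInt K nv I m ↪o lcmSet K nv I where
  toFun p := ⟨p.1, p.2.1⟩
  inj' _ _ h := Subtype.ext (Subtype.mk.inj h)
  map_rel_iff' := Iff.rfl

theorem range_openIntEmbedding (m : lcmSet K nv I) :
    Set.range (openIntEmbedding (I := I) m.1) = Set.Ioo ⊥ m := by
  ext x
  exact ⟨by rintro ⟨p, rfl⟩; exact ⟨p.2.2.1, p.2.2.2⟩, fun h => ⟨⟨x.1, x.2, h.1, h.2⟩, rfl⟩⟩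

theorem boundariesIn_le_cyclesAt {L P : Type} [SemilatticeSup L] [OrderBot L] [Preorder P]
    {m : L} (g : P ↪o L) (hg : Set.range g = Set.Ioo ⊥ m) (n : ℕ) :
    boundariesIn K P n ≤ cyclesAt K P n := by
  cases n with
  | zero => exact le_top
  | succ n =>
    rintro _ ⟨x, rfl⟩
    refine chainVec_injective g hg n (chainIncl_injective ?_)
    rw [← listD_chainVec, ← listD_chainVec, listD_listD, map_zero, map_zero]

theorem mem_lcmSet_of_multiBetti_ne_zero {i : ℕ} {m : Fin nv → ℕ}
    (h : multiBetti K nv I (i + 1) m ≠ 0) : m ∈ lcmSet K nv I ∧ m ≠ 0 := by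
  by_contra hm
  exact h (by rw [multiBetti, if_neg (Nat.succ_ne_zero i), if_neg hm])

theorem multiBetti_ne_zero_iff {i : ℕ} {m : lcmSet K nv I} (hm : ⊥ < m) :
    multiBetti K nv I (i + 1) m ≠ 0 ↔ ¬ (chainComplex K (lcmSet K nv I)).Acyclic m i := by
  have hm₀ : m.1 ≠ 0 := fun h => hm.ne' (Subtype.ext h)
  have hfin : Finite (openInt K nv I m) := Finite.of_injective _ (openIntEmbedding m.1).injective
  have : Finite (OChain (openInt K nv I m) i) := Subtype.finite
  have hle := boundariesIn_le_cyclesAt (K := K) _ (range_openIntEmbedding m) i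
  rw [← cyclesAt_le_boundariesIn_iff _ (range_openIntEmbedding m) hm, multiBetti,
    if_neg (Nat.succ_ne_zero i), if_pos ⟨m.2, hm₀⟩, Nat.add_sub_cancel, Nat.sub_ne_zero_iff_lt]
  refine ⟨fun h h' => h.not_ge (Submodule.finrank_mono h'), fun h => ?_⟩
  exact Submodule.finrank_lt_finrank_of_lt (lt_of_le_not_ge hle h)

/-- A multidegree with a nonzero Betti number in homological degree `i₁ + i₂` is the join of
multidegrees with nonzero Betti numbers in homological degrees `i₁` and `i₂`. -/
theorem exists_sup_eq_of_multiBetti_ne_zero {a b : ℕ} {m : Fin nv → ℕ}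
    (h : multiBetti K nv I (a + 1 + (b + 1)) m ≠ 0) :
    ∃ x y, x ⊔ y = m ∧ multiBetti K nv I (a + 1) x ≠ 0 ∧ multiBetti K nv I (b + 1) y ≠ 0 := by
  rw [show a + 1 + (b + 1) = a + b + 1 + 1 by omega] at h
  obtain ⟨hm, hm₀⟩ := mem_lcmSet_of_multiBetti_ne_zero h
  lift m to lcmSet K nv I using hm
  have hm' : ⊥ < m := bot_lt_iff_ne_bot.2 fun h => hm₀ (congrArg Subtype.val h)
  rw [multiBetti_ne_zero_iff hm'] at h
  by_contra! hcon
  refine h ((chainComplex_isResolution K _).acyclic_of_forall_sup_eq hm' a b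
    fun x y hx hy hxy => ?_)
  by_contra! hac
  exact (multiBetti_ne_zero_iff hy).2 hac.2
    (hcon x y (congrArg Subtype.val hxy) ((multiBetti_ne_zero_iff hx).2 hac.1))

theorem betti_ne_zero {i : ℕ} {m : Fin nv → ℕ} (h : multiBetti K nv I (i + 1) m ≠ 0) :
    betti K nv I (i + 1) (degTot nv m) ≠ 0 := by
  have hfin : ({m' | degTot nv m' = degTot nv m} ∩
      Function.support (multiBetti K nv I (i + 1))).Finite :=
    lcmSet_finite.subset fun m' hm' => (mem_lcmSet_of_multiBetti_ne_zero hm'.2).1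
  have hsum := finsum_mem_eq_sum _ hfin
  refine fun h0 => h (Finset.sum_eq_zero_iff.1 (hsum.symm.trans h0) m ?_)
  exact (Set.Finite.mem_toFinset _).2 ⟨rfl, h⟩

theorem exists_of_betti_ne_zero {i j : ℕ} (h : betti K nv I i j ≠ 0) :
    ∃ m, degTot nv m = j ∧ multiBetti K nv I i m ≠ 0 :=
  exists_ne_zero_of_finsum_mem_ne_zero h

theorem degTot_le_tshift {i : ℕ} {m : Fin nv → ℕ} (h : multiBetti K nv I (i + 1) m ≠ 0) :
    degTot nv m ≤ tshift K nv I (i + 1) := by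
  refine le_csSup ((lcmSet_finite (I := I)).image (degTot nv) |>.bddAbove.mono ?_)
    (betti_ne_zero h)
  intro j hj
  obtain ⟨m', rfl, hm'⟩ := exists_of_betti_ne_zero hj
  exact ⟨m', (mem_lcmSet_of_multiBetti_ne_zero hm').1, rfl⟩

theorem degTot_sup_le (x y : Fin nv → ℕ) :
    degTot nv (x ⊔ y) ≤ degTot nv x + degTot nv y := by
  rw [degTot, degTot, degTot, ← Finset.sum_add_distrib]
  exact Finset.sum_le_sum fun r _ => sup_le (Nat.le_add_right _ _) (Nat.le_add_left _ _)

end LcmLattice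

/-- **subadditivity of maximal shifts.**  Let `I` be a monomial ideal in
`S = K[x₁, …, xₙ]`.  Then for all `i₁, i₂ ≥ 0` one has
`t_{i₁+i₂}(S/I) ≤ t_{i₁}(S/I) + t_{i₂}(S/I)`. -/
theorem maximal_shifts_subadditive (nv : ℕ) (I : Ideal (PolyS K nv))
    (hI : IsMonomialIdeal K nv I) (i₁ i₂ : ℕ) :
    tshift K nv I (i₁ + i₂) ≤ tshift K nv I i₁ + tshift K nv I i₂ := by
  rcases i₁ with _ | a
  · rw [Nat.zero_add]
    exact Nat.le_add_left _ _
  rcases i₂ with _ | b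
  · exact Nat.le_add_right _ _
  refine csSup_le' fun j hj => ?_
  obtain ⟨m, rfl, hm⟩ := exists_of_betti_ne_zero hj
  obtain ⟨x, y, rfl, hx, hy⟩ := exists_sup_eq_of_multiBetti_ne_zero hm
  exact (degTot_sup_le x y).trans (add_le_add (degTot_le_tshift hx) (degTot_le_tshift hy))

end
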